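/- (ℬ, ⋆) is an associative unital ℂ-algebra whose unit is the empty B-diagram ε, and it is graded by ω: for all B-diagrams G and G', the element G ⋆ G' is a linear combination of B-diagrams G'' with ω(G'') = ω(G) + ω(G'). -/

import Mathlib

open scoped BigOperators

structure BD where
  lam : List ℕ
  up : Finset ℕ
  dn : Finset ℕ
  ed : Finset (ℕ × ℕ)
deriving DecidableEq

namespace BD

/-- number of vertices -/
def nv (G : BD) : ℕ := G.lam.length

/-- number of half-edges -/
def omega (G : BD) : ℕ := G.lam.sum

/-- the vertex to which a half-edge belongs -/
def v (G : BD) (k : ℕ) : ℕ :=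
  (List.range G.lam.length).countP (fun i => (G.lam.take i).sum < k)

def Valid (G : BD) : Prop :=
  (∀ x ∈ G.lam, 0 < x) ∧
  G.up ⊆ Finset.Icc 1 G.omega ∧
  G.dn ⊆ Finset.Icc 1 G.omega ∧
  (∀ p ∈ G.ed, p.1 ∈ G.up ∧ p.2 ∈ G.dn ∧ G.v p.1 < G.v p.2) ∧
  (∀ p ∈ G.ed, ∀ q ∈ G.ed, p.1 = q.1 → p = q) ∧
  (∀ p ∈ G.ed, ∀ q ∈ G.ed, p.2 = q.2 → p = q)

def eps : BD := ⟨[], ∅, ∅, ∅⟩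

theorem eps_valid : eps.Valid := by
  refine ⟨?_, ?_, ?_, ?_, ?_, ?_⟩ <;> simp [eps, Valid, omega]

def HfUp (G : BD) : Finset ℕ := G.up \ G.ed.image Prod.fst
def HfDn (G : BD) : Finset ℕ := G.dn \ G.ed.image Prod.snd
def hfUp (G : BD) : ℕ := G.HfUp.card
def hfDn (G : BD) : ℕ := G.HfDn.card
def hc (G : BD) : ℕ :=
  (G.omega - G.ed.card - G.hfUp) + (G.omega - G.ed.card - G.hfDn)

/-- composition of `G'` over `G` along a matching `s` -/
def comp (G G' : BD) (s : Finset (ℕ × ℕ)) : BD where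
  lam := G.lam ++ G'.lam
  up := G.up ∪ G'.up.image (· + G.omega)
  dn := G.dn ∪ G'.dn.image (· + G.omega)
  ed := G.ed ∪ s.image (fun p => (p.1, p.2 + G.omega)) ∪
        G'.ed.image (fun p => (p.1 + G.omega, p.2 + G.omega))

/-- `s` encodes a strictly increasing sequence `a₁ < ⋯ < a_k` of elements of `H_f↑(G)`
matched with pairwise distinct elements `b₁,…,b_k` of `H_f↓(G')`. -/
def Matching (G G' : BD) (s : Finset (ℕ × ℕ)) : Prop :=
  (∀ p ∈ s, p.1 ∈ G.HfUp ∧ p.2 ∈ G'.HfDn) ∧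
  (∀ p ∈ s, ∀ q ∈ s, p.1 = q.1 → p = q) ∧
  (∀ p ∈ s, ∀ q ∈ s, p.2 = q.2 → p = q)

open scoped Classical in
noncomputable def matchings (G G' : BD) : Finset (Finset (ℕ × ℕ)) :=
  (G.HfUp ×ˢ G'.HfDn).powerset.filter (fun s => Matching G G' s)

/-- juxtaposition -/
def juxt (G G' : BD) : BD := comp G G' ∅

def Indiv (G : BD) : Prop :=
  ∀ G₁ G₂ : BD, G₁.Valid → G₂.Valid → G = juxt G₁ G₂ → G₁ = G ∨ G₂ = G

/-- half-edges attached to the vertices in `I` -/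
def HI (G : BD) (I : Finset ℕ) : Finset ℕ :=
  (Finset.Icc 1 G.omega).filter (fun k => G.v k ∈ I)

/-- the increasing relabelling bijection -/
def phi (G : BD) (I : Finset ℕ) (k : ℕ) : ℕ := ((G.HI I).filter (· ≤ k)).card

/-- sub-B-diagram on the set of vertices `I` -/
def sub (G : BD) (I : Finset ℕ) : BD where
  lam := ((List.range G.lam.length).filter (fun i => i + 1 ∈ I)).map (fun i => G.lam.getD i 0)
  up := (G.up ∩ G.HI I).image (G.phi I)
  dn := (G.dn ∩ G.HI I).image (G.phi I)
  ed := (G.ed.filter (fun p => G.v p.1 ∈ I ∧ G.v p.2 ∈ I)).image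
          (fun p => (G.phi I p.1, G.phi I p.2))

def Isolated (G : BD) (I : Finset ℕ) : Prop :=
  ∀ p ∈ G.ed, (G.v p.1 ∈ I ↔ G.v p.2 ∈ I)

def Connected (G : BD) : Prop :=
  ∀ i j : ℕ, 1 ≤ i → i < j → j ≤ G.nv →
    ∃ (k : ℕ) (c : Fin (k + 1) → ℕ × ℕ),
      (∀ ℓ, c ℓ ∈ G.ed) ∧
      (i = G.v (c 0).1 ∨ i = G.v (c 0).2) ∧
      (j = G.v (c (Fin.last k)).1 ∨ j = G.v (c (Fin.last k)).2) ∧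
      ∀ ℓ : Fin k,
        G.v (c ℓ.castSucc).1 = G.v (c ℓ.succ).1 ∨ G.v (c ℓ.castSucc).1 = G.v (c ℓ.succ).2 ∨
        G.v (c ℓ.castSucc).2 = G.v (c ℓ.succ).1 ∨ G.v (c ℓ.castSucc).2 = G.v (c ℓ.succ).2

def IsConnComp (G : BD) (I : Finset ℕ) : Prop :=
  I ⊆ Finset.Icc 1 G.nv ∧ I.Nonempty ∧ (G.sub I).Connected ∧
  ∀ J : Finset ℕ, I ⊆ J → J ⊆ Finset.Icc 1 G.nv → (G.sub J).Connected → J = I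

end BD

open scoped TensorProduct

/-- B-diagrams -/
abbrev BDiagram := {G : BD // G.Valid}

/-- the free `ℂ`-vector space on the set of B-diagrams -/
abbrev BSpace := BDiagram →₀ ℂ

open scoped Classical in
noncomputable def mkB (G : BD) : BSpace :=
  if h : G.Valid then Finsupp.single ⟨G, h⟩ 1 else 0

noncomputable def unitB : BSpace := Finsupp.single ⟨BD.eps, BD.eps_valid⟩ 1

noncomputable def liftB {V : Type*} [AddCommMonoid V] [Module ℂ V] (f : BDiagram → V) :
    BSpace →ₗ[ℂ] V :=
  Finsupp.lsum ℂ fun A => LinearMap.toSpanSingleton ℂ V (f A)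

noncomputable def mulfun (A B : BDiagram) : BSpace :=
  ∑ s ∈ BD.matchings A.1 B.1, mkB (BD.comp A.1 B.1 s)

/-- the product ⋆ of the algebra of B-diagrams, as a bilinear map -/
noncomputable def starB : BSpace →ₗ[ℂ] BSpace →ₗ[ℂ] BSpace :=
  liftB fun A => liftB fun B => mulfun A B

open scoped Classical in
/-- the coproduct evaluated on a B-diagram -/
noncomputable def dfun (A : BDiagram) : BSpace ⊗[ℂ] BSpace :=
  ∑ I ∈ (Finset.Icc 1 A.1.nv).powerset.filter (fun I => A.1.Isolated I),
    mkB (A.1.sub I) ⊗ₜ[ℂ] mkB (A.1.sub (Finset.Icc 1 A.1.nv \ I))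

/-- the coproduct Δ of ℬ -/
noncomputable def deltaL : BSpace →ₗ[ℂ] BSpace ⊗[ℂ] BSpace := liftB dfun

/-- the counit of ℬ -/
noncomputable def counitB : BSpace →ₗ[ℂ] ℂ :=
  liftB fun A => if A.1 = BD.eps then (1 : ℂ) else 0

/-!
Both iterated products of `A`, `B`, `C` are sums over the same triples: a matching `s` of `A`
with `B`, a matching `q` of `B` with `C`, and a matching `r` of `A` with `C` among the half-edges
left free by `s` and `q`. Indeed the free half-edges of a composition are a disjoint union, and a
matching of a disjoint union splits uniquely into a matching of the first part and a matching of
the second part with what the first leaves free. In `(A ⋆ B) ⋆ C` the sum over `s` comes first, in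
`A ⋆ (B ⋆ C)` the sum over `q`, so associativity is the exchange of these two sums.
-/

theorem disjoint_image_add {n : ℕ} {U V : Finset ℕ} (hU : ∀ x ∈ U, x ≤ n)
    (hV : ∀ x ∈ V, 0 < x) : Disjoint U (V.image (· + n)) := by
  refine Finset.disjoint_left.2 fun x hxU hxV ↦ ?_
  obtain ⟨y, hy, rfl⟩ := Finset.mem_image.1 hxV
  exact (hU _ hxU).not_gt (Nat.lt_add_of_pos_left (hV y hy))

theorem union_image_add_subset_Icc {n m : ℕ} {U V : Finset ℕ} (hU : U ⊆ Finset.Icc 1 n)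
    (hV : V ⊆ Finset.Icc 1 m) : U ∪ V.image (· + n) ⊆ Finset.Icc 1 (n + m) := by
  refine Finset.union_subset (hU.trans (Finset.Icc_subset_Icc_right (Nat.le_add_right n m)))
    (Finset.image_subset_iff.2 fun x hx ↦ ?_)
  have := Finset.mem_Icc.1 (hV hx)
  exact Finset.mem_Icc.2 (by omega)

theorem union_sdiff_union_of_disjoint {α : Type*} [DecidableEq α] {U V E F : Finset α}
    (hUV : Disjoint U V) (hE : E ⊆ U) (hF : F ⊆ V) :
    (U ∪ V) \ (E ∪ F) = (U \ E) ∪ (V \ F) := by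
  grind [Finset.disjoint_left]

section PartialMatchings

variable {α β γ δ M : Type*}

open scoped Classical in
/-- The matchings of a subset of `U` with a subset of `D`, each encoded as the finite set of its
pairs. -/
noncomputable def partialMatchings (U : Finset α) (D : Finset β) : Finset (Finset (α × β)) :=
  {s ∈ (U ×ˢ D).powerset | Set.InjOn Prod.fst (s : Set (α × β)) ∧
    Set.InjOn Prod.snd (s : Set (α × β))}

theorem mem_partialMatchings {U : Finset α} {D : Finset β} {s : Finset (α × β)} :
    s ∈ partialMatchings U D ↔ s ⊆ U ×ˢ D ∧ Set.InjOn Prod.fst (s : Set (α × β)) ∧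
      Set.InjOn Prod.snd (s : Set (α × β)) := by
  simp only [partialMatchings, Finset.mem_filter, Finset.mem_powerset]

theorem partialMatchings_mono {U U' : Finset α} {D D' : Finset β} (hU : U ⊆ U') (hD : D ⊆ D') :
    partialMatchings U D ⊆ partialMatchings U' D' := fun s hs ↦ by
  rw [mem_partialMatchings] at hs ⊢
  exact ⟨hs.1.trans (Finset.product_subset_product hU hD), hs.2⟩

theorem partialMatchings_empty_left (D : Finset β) :
    partialMatchings (∅ : Finset α) D = {∅} := by
  ext s
  simp +contextual [mem_partialMatchings]

theorem partialMatchings_empty_right (U : Finset α) :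
    partialMatchings U (∅ : Finset β) = {∅} := by
  ext s
  simp +contextual [mem_partialMatchings]

theorem image_prodMap_mem_partialMatchings [DecidableEq γ] [DecidableEq δ] {g : α → γ}
    {h : β → δ} (hg : g.Injective) (hh : h.Injective) {U : Finset α} {D : Finset β}
    {s : Finset (α × β)} :
    s.image (Prod.map g h) ∈ partialMatchings (U.image g) (D.image h) ↔
      s ∈ partialMatchings U D := by
  have inj : (Prod.map g h).Injective := hg.prodMap hh
  have fst : Set.InjOn Prod.fst (Prod.map g h '' s) ↔ Set.InjOn Prod.fst (s : Set (α × β)) :=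
    inj.injOn.comp_iff.symm.trans ⟨fun H ↦ H.of_comp (f := Prod.fst), hg.comp_injOn⟩
  have snd : Set.InjOn Prod.snd (Prod.map g h '' s) ↔ Set.InjOn Prod.snd (s : Set (α × β)) :=
    inj.injOn.comp_iff.symm.trans ⟨fun H ↦ H.of_comp (f := Prod.snd), hh.comp_injOn⟩
  rw [mem_partialMatchings, mem_partialMatchings, ← Finset.prodMap_image_product,
    Finset.image_subset_image_iff inj, Finset.coe_image, fst, snd]

theorem partialMatchings_image [DecidableEq γ] [DecidableEq δ] {g : α → γ} {h : β → δ}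
    (hg : g.Injective) (hh : h.Injective) (U : Finset α) (D : Finset β) :
    partialMatchings (U.image g) (D.image h) =
      (partialMatchings U D).image (Finset.image (Prod.map g h)) := by
  ext t
  rw [Finset.mem_image]
  refine ⟨fun ht ↦ ?_, ?_⟩
  · have ht' := (mem_partialMatchings.1 ht).1
    rw [← Finset.prodMap_image_product] at ht'
    obtain ⟨s, -, rfl⟩ := Finset.subset_image_iff.1 ht'
    exact ⟨s, (image_prodMap_mem_partialMatchings hg hh).1 ht, rfl⟩
  · rintro ⟨s, hs, rfl⟩
    exact (image_prodMap_mem_partialMatchings hg hh).2 hs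

theorem sum_partialMatchings_image [AddCommMonoid M] [DecidableEq γ] [DecidableEq δ] {g : α → γ}
    {h : β → δ} (hg : g.Injective) (hh : h.Injective) (U : Finset α) (D : Finset β)
    (f : Finset (γ × δ) → M) :
    ∑ t ∈ partialMatchings (U.image g) (D.image h), f t =
      ∑ s ∈ partialMatchings U D, f (s.image (Prod.map g h)) := by
  rw [partialMatchings_image hg hh,
    Finset.sum_image (Finset.image_injective (hg.prodMap hh)).injOn]

theorem mem_partialMatchings_image_snd [DecidableEq β] {U : Finset α} {D : Finset β}
    {s : Finset (α × β)} (hs : s ∈ partialMatchings U D) :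
    s ∈ partialMatchings U (s.image Prod.snd) := by
  rw [mem_partialMatchings] at hs ⊢
  exact ⟨fun p hp ↦ Finset.mem_product.2
    ⟨(Finset.mem_product.1 (hs.1 hp)).1, Finset.mem_image_of_mem _ hp⟩, hs.2⟩

theorem image_snd_subset_of_mem_partialMatchings [DecidableEq β] {U : Finset α}
    {D : Finset β} {s : Finset (α × β)} (hs : s ∈ partialMatchings U D) : s.image Prod.snd ⊆ D :=
  Finset.image_subset_iff.2 fun _ hp ↦
    (Finset.mem_product.1 ((mem_partialMatchings.1 hs).1 hp)).2

variable [DecidableEq α]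

theorem image_fst_subset_of_mem_partialMatchings {U : Finset α} {D : Finset β}
    {s : Finset (α × β)} (hs : s ∈ partialMatchings U D) : s.image Prod.fst ⊆ U :=
  Finset.image_subset_iff.2 fun _ hp ↦
    (Finset.mem_product.1 ((mem_partialMatchings.1 hs).1 hp)).1

theorem filter_fst_mem_partialMatchings {U U' : Finset α} {D : Finset β} {s : Finset (α × β)}
    (hs : s ∈ partialMatchings U D) : {p ∈ s | p.1 ∈ U'} ∈ partialMatchings U' D := by
  rw [mem_partialMatchings] at hs ⊢
  obtain ⟨sub, fst, snd⟩ := hs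
  refine ⟨fun p hp ↦ ?_, fst.mono (Finset.filter_subset _ s), snd.mono (Finset.filter_subset _ s)⟩
  rw [Finset.mem_filter] at hp
  exact Finset.mem_product.2 ⟨hp.2, (Finset.mem_product.1 (sub hp.1)).2⟩

theorem filter_fst_mem_eq_self {U : Finset α} {D : Finset β} {s : Finset (α × β)}
    (hs : s ∈ partialMatchings U D) : {p ∈ s | p.1 ∈ U} = s :=
  Finset.filter_true_of_mem fun _ hp ↦
    (Finset.mem_product.1 ((mem_partialMatchings.1 hs).1 hp)).1

theorem filter_fst_mem_eq_empty {U U' : Finset α} {D : Finset β} {s : Finset (α × β)}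
    (hU : Disjoint U U') (hs : s ∈ partialMatchings U D) : {p ∈ s | p.1 ∈ U'} = ∅ :=
  Finset.filter_false_of_mem fun _ hp ↦ Finset.disjoint_left.1 hU
    (Finset.mem_product.1 ((mem_partialMatchings.1 hs).1 hp)).1

variable [DecidableEq β] [AddCommMonoid M]

theorem union_mem_partialMatchings {U₁ U₂ : Finset α} {D₁ D₂ : Finset β}
    {s₁ s₂ : Finset (α × β)} (hU : Disjoint U₁ U₂) (hD : Disjoint D₁ D₂)
    (h₁ : s₁ ∈ partialMatchings U₁ D₁) (h₂ : s₂ ∈ partialMatchings U₂ D₂) :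
    s₁ ∪ s₂ ∈ partialMatchings (U₁ ∪ U₂) (D₁ ∪ D₂) := by
  rw [mem_partialMatchings] at *
  obtain ⟨sub₁, fst₁, snd₁⟩ := h₁
  obtain ⟨sub₂, fst₂, snd₂⟩ := h₂
  have hs : Disjoint (s₁ : Set (α × β)) s₂ := Finset.disjoint_coe.2 <|
    (Finset.disjoint_product.2 (.inl hU)).mono sub₁ sub₂
  rw [Finset.coe_union, Set.injOn_union hs, Set.injOn_union hs]
  refine ⟨Finset.union_subset
    (sub₁.trans (Finset.product_subset_product Finset.subset_union_left Finset.subset_union_left))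
    (sub₂.trans
      (Finset.product_subset_product Finset.subset_union_right Finset.subset_union_right)),
    ⟨fst₁, fst₂, fun p hp q hq ↦ ?_⟩, ⟨snd₁, snd₂, fun p hp q hq ↦ ?_⟩⟩
  · exact Finset.disjoint_iff_ne.1 hU _ (Finset.mem_product.1 (sub₁ hp)).1 _
      (Finset.mem_product.1 (sub₂ hq)).1
  · exact Finset.disjoint_iff_ne.1 hD _ (Finset.mem_product.1 (sub₁ hp)).2 _
      (Finset.mem_product.1 (sub₂ hq)).2

theorem union_mem_partialMatchings_of_sdiff {U₁ U₂ : Finset α} {D : Finset β}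
    {s₁ s₂ : Finset (α × β)} (hU : Disjoint U₁ U₂) (h₁ : s₁ ∈ partialMatchings U₁ D)
    (h₂ : s₂ ∈ partialMatchings U₂ (D \ s₁.image Prod.snd)) :
    s₁ ∪ s₂ ∈ partialMatchings (U₁ ∪ U₂) D := by
  have h := union_mem_partialMatchings hU Finset.disjoint_sdiff
    (mem_partialMatchings_image_snd h₁) h₂
  rwa [Finset.union_sdiff_of_subset (image_snd_subset_of_mem_partialMatchings h₁)] at h

theorem filter_fst_mem_partialMatchings_sdiff {U U₁ U₂ : Finset α} {D : Finset β}
    {s : Finset (α × β)} (hU : Disjoint U₁ U₂) (hs : s ∈ partialMatchings U D) :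
    {p ∈ s | p.1 ∈ U₂} ∈
      partialMatchings U₂ (D \ Finset.image Prod.snd {p ∈ s | p.1 ∈ U₁}) := by
  obtain ⟨sub₂, inj⟩ := mem_partialMatchings.1 (filter_fst_mem_partialMatchings (U' := U₂) hs)
  refine mem_partialMatchings.2 ⟨fun p hp ↦ ?_, inj⟩
  obtain ⟨hpU, hpD⟩ := Finset.mem_product.1 (sub₂ hp)
  refine Finset.mem_product.2 ⟨hpU, Finset.mem_sdiff.2 ⟨hpD, fun hp' ↦ ?_⟩⟩
  obtain ⟨q, hq, hqp⟩ := Finset.mem_image.1 hp'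
  rw [Finset.mem_filter] at hp hq
  obtain rfl := (mem_partialMatchings.1 hs).2.2 hq.1 hp.1 hqp
  exact Finset.disjoint_left.1 hU hq.2 hpU

theorem sum_partialMatchings_union_left {U₁ U₂ : Finset α} (hU : Disjoint U₁ U₂) (D : Finset β)
    (f : Finset (α × β) → M) :
    ∑ t ∈ partialMatchings (U₁ ∪ U₂) D, f t =
      ∑ s₁ ∈ partialMatchings U₁ D, ∑ s₂ ∈ partialMatchings U₂ (D \ s₁.image Prod.snd),
        f (s₁ ∪ s₂) := by
  have union_filter {t : Finset (α × β)} (ht : t ∈ partialMatchings (U₁ ∪ U₂) D) :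
      {p ∈ t | p.1 ∈ U₁} ∪ {p ∈ t | p.1 ∈ U₂} = t := by
    simpa only [← Finset.filter_or, ← Finset.mem_union] using filter_fst_mem_eq_self ht
  rw [Finset.sum_sigma']
  refine Finset.sum_bij' (fun t _ ↦ ⟨{p ∈ t | p.1 ∈ U₁}, {p ∈ t | p.1 ∈ U₂}⟩)
    (fun s _ ↦ s.1 ∪ s.2) (fun t ht ↦ ?_) (fun s hs ↦ ?_) (fun t ht ↦ union_filter ht)
    (fun s hs ↦ ?_) (fun t ht ↦ by rw [union_filter ht])
  · exact Finset.mem_sigma.2 ⟨filter_fst_mem_partialMatchings ht,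
      filter_fst_mem_partialMatchings_sdiff hU ht⟩
  · obtain ⟨h₁, h₂⟩ := Finset.mem_sigma.1 hs
    exact union_mem_partialMatchings_of_sdiff hU h₁ h₂
  · obtain ⟨h₁, h₂⟩ := Finset.mem_sigma.1 hs
    simp only [Finset.filter_union, filter_fst_mem_eq_self h₁, filter_fst_mem_eq_self h₂,
      filter_fst_mem_eq_empty hU h₁, filter_fst_mem_eq_empty hU.symm h₂, Finset.union_empty,
      Finset.empty_union]

theorem image_swap_mem_partialMatchings {U : Finset α} {D : Finset β} {s : Finset (α × β)}
    (hs : s ∈ partialMatchings U D) : s.image Prod.swap ∈ partialMatchings D U := by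
  obtain ⟨sub, fst, snd⟩ := mem_partialMatchings.1 hs
  rw [mem_partialMatchings, ← Finset.image_swap_product, Finset.coe_image]
  exact ⟨Finset.image_subset_image sub, Set.InjOn.image_of_comp snd, Set.InjOn.image_of_comp fst⟩

theorem sum_partialMatchings_swap (U : Finset α) (D : Finset β) (f : Finset (β × α) → M) :
    ∑ t ∈ partialMatchings D U, f t = ∑ s ∈ partialMatchings U D, f (s.image Prod.swap) := by
  refine Finset.sum_bij' (fun t _ ↦ t.image Prod.swap) (fun s _ ↦ s.image Prod.swap)
    (fun _ ↦ image_swap_mem_partialMatchings) (fun _ ↦ image_swap_mem_partialMatchings) ?_ ?_ ?_ <;>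
  simp [Finset.image_image]

theorem sum_partialMatchings_union_right (U : Finset α) {D₁ D₂ : Finset β} (hD : Disjoint D₁ D₂)
    (f : Finset (α × β) → M) :
    ∑ t ∈ partialMatchings U (D₁ ∪ D₂), f t =
      ∑ s₁ ∈ partialMatchings U D₁, ∑ s₂ ∈ partialMatchings (U \ s₁.image Prod.fst) D₂,
        f (s₁ ∪ s₂) := by
  rw [sum_partialMatchings_swap (D₁ ∪ D₂) U, sum_partialMatchings_union_left hD,
    sum_partialMatchings_swap U D₁]
  refine Finset.sum_congr rfl fun s₁ _ ↦ ?_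
  rw [sum_partialMatchings_swap _ D₂, Finset.image_image]
  simp only [Finset.image_union, Finset.image_image, Prod.swap_swap_eq, Finset.image_id]
  rfl

end PartialMatchings

namespace BD

variable {A B C G G' : BD} {s : Finset (ℕ × ℕ)}

theorem matchings_eq_partialMatchings (G G' : BD) :
    matchings G G' = partialMatchings G.HfUp G'.HfDn := by
  ext s
  simp only [matchings, mem_partialMatchings, Finset.mem_filter, Finset.mem_powerset]
  exact and_congr_right fun hs ↦ and_iff_right fun p hp ↦ Finset.mem_product.1 (hs hp)

theorem comp_up (G G' : BD) (s : Finset (ℕ × ℕ)) :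
    (comp G G' s).up = G.up ∪ G'.up.image (· + G.omega) := rfl

theorem comp_dn (G G' : BD) (s : Finset (ℕ × ℕ)) :
    (comp G G' s).dn = G.dn ∪ G'.dn.image (· + G.omega) := rfl

theorem comp_ed (G G' : BD) (s : Finset (ℕ × ℕ)) :
    (comp G G' s).ed = G.ed ∪ s.image (Prod.map id (· + G.omega)) ∪
      G'.ed.image (Prod.map (· + G.omega) (· + G.omega)) := rfl

theorem omega_comp (G G' : BD) (s : Finset (ℕ × ℕ)) :
    (comp G G' s).omega = G.omega + G'.omega := by
  simp only [comp, omega, List.sum_append]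

theorem v_le_nv (G : BD) (k : ℕ) : G.v k ≤ G.nv :=
  List.countP_le_length.trans_eq List.length_range

theorem v_pos {k : ℕ} (hk : k ∈ Finset.Icc 1 G.omega) : 0 < G.v k := by
  rw [Finset.mem_Icc] at hk
  have nv_pos : 0 < G.lam.length := List.length_pos_iff.2 fun h ↦ by
    simp only [omega, h, List.sum_nil] at hk
    omega
  refine List.countP_pos_iff.2 ⟨0, List.mem_range.2 nv_pos, decide_eq_true ?_⟩
  rw [List.take_zero, List.sum_nil]
  exact hk.1

theorem v_eq_nv {k : ℕ} (hk : G.omega < k) : G.v k = G.nv := by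
  refine (List.countP_eq_length.2 fun i _ ↦ decide_eq_true ?_).trans List.length_range
  exact ((List.take_sublist i G.lam).sum_le_sum fun _ _ ↦ Nat.zero_le _).trans_lt hk

theorem v_comp (G G' : BD) (s : Finset (ℕ × ℕ)) (k : ℕ) :
    (comp G G' s).v k =
      G.v k + (List.range G'.nv).countP (fun i ↦ G.omega + (G'.lam.take i).sum < k) := by
  change (List.range (G.lam ++ G'.lam).length).countP
    (fun i ↦ ((G.lam ++ G'.lam).take i).sum < k) = _
  rw [List.length_append, List.range_add, List.countP_append, List.countP_map]
  refine congrArg₂ (· + ·) (List.countP_congr fun i hi ↦ ?_) (List.countP_congr fun i _ ↦ ?_)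
  · rw [decide_eq_true_eq, decide_eq_true_eq,
      List.take_append_of_le_length (List.mem_range.1 hi).le]
  · rw [Function.comp_apply, List.take_length_add_append, List.sum_append]
    rfl

theorem v_comp_of_le (G' : BD) (s : Finset (ℕ × ℕ)) {k : ℕ} (hk : k ≤ G.omega) :
    (comp G G' s).v k = G.v k := by
  rw [v_comp, List.countP_eq_zero.2, add_zero]
  intro i _
  rw [decide_eq_true_eq]
  omega

theorem v_comp_add (G G' : BD) (s : Finset (ℕ × ℕ)) {k : ℕ} (hk : 0 < k) :
    (comp G G' s).v (k + G.omega) = G.nv + G'.v k := by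
  rw [v_comp, v_eq_nv (Nat.lt_add_of_pos_left hk)]
  refine congrArg _ (List.countP_congr fun i _ ↦ ?_)
  rw [decide_eq_true_eq, decide_eq_true_eq]
  omega

theorem Valid.up_subset (hG : G.Valid) : G.up ⊆ Finset.Icc 1 G.omega := hG.2.1

theorem Valid.dn_subset (hG : G.Valid) : G.dn ⊆ Finset.Icc 1 G.omega := hG.2.2.1

theorem Valid.fst_mem_up (hG : G.Valid) {p : ℕ × ℕ} (hp : p ∈ G.ed) : p.1 ∈ G.up :=
  (hG.2.2.2.1 p hp).1

theorem Valid.snd_mem_dn (hG : G.Valid) {p : ℕ × ℕ} (hp : p ∈ G.ed) : p.2 ∈ G.dn :=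
  (hG.2.2.2.1 p hp).2.1

theorem Valid.v_lt_v (hG : G.Valid) {p : ℕ × ℕ} (hp : p ∈ G.ed) : G.v p.1 < G.v p.2 :=
  (hG.2.2.2.1 p hp).2.2

theorem HfUp_subset_up (G : BD) : G.HfUp ⊆ G.up := Finset.sdiff_subset

theorem HfDn_subset_dn (G : BD) : G.HfDn ⊆ G.dn := Finset.sdiff_subset

theorem Valid.ed_mem_partialMatchings (hG : G.Valid) :
    G.ed ∈ partialMatchings (G.up \ G.HfUp) (G.dn \ G.HfDn) := by
  obtain ⟨fst, snd⟩ := hG.2.2.2.2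
  refine mem_partialMatchings.2 ⟨fun p hp ↦ Finset.mem_product.2 ⟨?_, ?_⟩,
    fun p hp q hq ↦ fst p hp q hq, fun p hp q hq ↦ snd p hp q hq⟩
  · exact Finset.mem_sdiff.2
      ⟨hG.fst_mem_up hp, fun h ↦ (Finset.mem_sdiff.1 h).2 (Finset.mem_image_of_mem _ hp)⟩
  · exact Finset.mem_sdiff.2
      ⟨hG.snd_mem_dn hp, fun h ↦ (Finset.mem_sdiff.1 h).2 (Finset.mem_image_of_mem _ hp)⟩

theorem disjoint_up_image_add (hG : G.Valid) (hG' : G'.Valid) :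
    Disjoint G.up (G'.up.image (· + G.omega)) :=
  disjoint_image_add (fun _ hx ↦ (Finset.mem_Icc.1 (hG.up_subset hx)).2)
    fun _ hx ↦ (Finset.mem_Icc.1 (hG'.up_subset hx)).1

theorem disjoint_dn_image_add (hG : G.Valid) (hG' : G'.Valid) :
    Disjoint G.dn (G'.dn.image (· + G.omega)) :=
  disjoint_image_add (fun _ hx ↦ (Finset.mem_Icc.1 (hG.dn_subset hx)).2)
    fun _ hx ↦ (Finset.mem_Icc.1 (hG'.dn_subset hx)).1

theorem comp_ed_mem_partialMatchings (hG : G.Valid) (hG' : G'.Valid) (hs : s ∈ matchings G G') :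
    (comp G G' s).ed ∈ partialMatchings (comp G G' s).up (comp G G' s).dn := by
  have inj := add_left_injective G.omega
  have hs' : s.image (Prod.map id (· + G.omega)) ∈
      partialMatchings G.HfUp (G'.HfDn.image (· + G.omega)) := by
    rw [matchings_eq_partialMatchings] at hs
    simpa only [Finset.image_id] using
      (image_prodMap_mem_partialMatchings Function.injective_id inj).2 hs
  have hed' : G'.ed.image (Prod.map (· + G.omega) (· + G.omega)) ∈
      partialMatchings (G'.up.image (· + G.omega) \ G'.HfUp.image (· + G.omega))
        (G'.dn.image (· + G.omega) \ G'.HfDn.image (· + G.omega)) := by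
    rw [← Finset.image_sdiff _ _ inj, ← Finset.image_sdiff _ _ inj]
    exact (image_prodMap_mem_partialMatchings inj inj).2 hG'.ed_mem_partialMatchings
  have hed_s : G.ed ∪ s.image (Prod.map id (· + G.omega)) ∈
      partialMatchings G.up ((G.dn \ G.HfDn) ∪ G'.HfDn.image (· + G.omega)) := by
    rw [← Finset.sdiff_union_of_subset G.HfUp_subset_up]
    exact union_mem_partialMatchings Finset.sdiff_disjoint
      ((disjoint_dn_image_add hG hG').mono Finset.sdiff_subset
        (Finset.image_subset_image G'.HfDn_subset_dn)) hG.ed_mem_partialMatchings hs'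
  have hed := union_mem_partialMatchings
    ((disjoint_up_image_add hG hG').mono_right Finset.sdiff_subset)
    (Finset.disjoint_union_left.2 ⟨(disjoint_dn_image_add hG hG').mono Finset.sdiff_subset
      Finset.sdiff_subset, Finset.disjoint_sdiff⟩) hed_s hed'
  rw [Finset.union_assoc, Finset.union_sdiff_of_subset
    (Finset.image_subset_image G'.HfDn_subset_dn)] at hed
  exact partialMatchings_mono (Finset.union_subset_union_right Finset.sdiff_subset)
    (Finset.union_subset_union_left Finset.sdiff_subset) hed

theorem v_lt_v_of_mem_comp_ed (hG : G.Valid) (hG' : G'.Valid) (hs : s ∈ matchings G G')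
    {p : ℕ × ℕ} (hp : p ∈ (comp G G' s).ed) : (comp G G' s).v p.1 < (comp G G' s).v p.2 := by
  have mem_Icc {H : BD} (hH : H.Valid) {q : ℕ × ℕ} (hq : q ∈ H.ed) :
      q.1 ∈ Finset.Icc 1 H.omega ∧ q.2 ∈ Finset.Icc 1 H.omega :=
    ⟨hH.up_subset (hH.fst_mem_up hq), hH.dn_subset (hH.snd_mem_dn hq)⟩
  simp only [comp_ed, Finset.mem_union, Finset.mem_image] at hp
  rcases hp with (hp | ⟨q, hq, rfl⟩) | ⟨q, hq, rfl⟩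
  · obtain ⟨h₁, h₂⟩ := mem_Icc hG hp
    rw [v_comp_of_le _ _ (Finset.mem_Icc.1 h₁).2, v_comp_of_le _ _ (Finset.mem_Icc.1 h₂).2]
    exact hG.v_lt_v hp
  · rw [matchings_eq_partialMatchings] at hs
    obtain ⟨h₁, h₂⟩ := Finset.mem_product.1 ((mem_partialMatchings.1 hs).1 hq)
    replace h₁ := hG.up_subset (G.HfUp_subset_up h₁)
    replace h₂ := hG'.dn_subset (G'.HfDn_subset_dn h₂)
    rw [Prod.map_fst, Prod.map_snd, id, v_comp_of_le _ _ (Finset.mem_Icc.1 h₁).2,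
      v_comp_add _ _ _ (Finset.mem_Icc.1 h₂).1]
    exact (G.v_le_nv _).trans_lt (Nat.lt_add_of_pos_right (v_pos h₂))
  · obtain ⟨h₁, h₂⟩ := mem_Icc hG' hq
    rw [Prod.map_fst, Prod.map_snd, v_comp_add _ _ _ (Finset.mem_Icc.1 h₁).1,
      v_comp_add _ _ _ (Finset.mem_Icc.1 h₂).1]
    exact Nat.add_lt_add_left (hG'.v_lt_v hq) _

theorem comp_valid (hG : G.Valid) (hG' : G'.Valid) (hs : s ∈ matchings G G') :
    (comp G G' s).Valid := by
  obtain ⟨sub, fst, snd⟩ := mem_partialMatchings.1 (comp_ed_mem_partialMatchings hG hG' hs)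
  refine ⟨fun x hx ↦ (List.mem_append.1 hx).elim (hG.1 x) (hG'.1 x), ?_, ?_, fun p hp ↦ ?_,
    fun p hp q hq ↦ fst hp hq, fun p hp q hq ↦ snd hp hq⟩
  · rw [omega_comp]
    exact union_image_add_subset_Icc hG.up_subset hG'.up_subset
  · rw [omega_comp]
    exact union_image_add_subset_Icc hG.dn_subset hG'.dn_subset
  · obtain ⟨hup, hdn⟩ := Finset.mem_product.1 (sub hp)
    exact ⟨hup, hdn, v_lt_v_of_mem_comp_ed hG hG' hs hp⟩

theorem HfUp_comp (hG : G.Valid) (hG' : G'.Valid) (hs : s ∈ matchings G G') :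
    (comp G G' s).HfUp = (G.HfUp \ s.image Prod.fst) ∪ G'.HfUp.image (· + G.omega) := by
  have ed_fst : (comp G G' s).ed.image Prod.fst =
      (G.ed.image Prod.fst ∪ s.image Prod.fst) ∪ (G'.ed.image Prod.fst).image (· + G.omega) := by
    simp only [comp_ed, Finset.image_union, Finset.image_image]
    rfl
  have ed_s_subset : G.ed.image Prod.fst ∪ s.image Prod.fst ⊆ G.up := by
    rw [matchings_eq_partialMatchings] at hs
    exact Finset.union_subset (Finset.image_subset_iff.2 fun _ ↦ hG.fst_mem_up)
      ((image_fst_subset_of_mem_partialMatchings hs).trans G.HfUp_subset_up)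
  have ed'_subset : G'.ed.image Prod.fst ⊆ G'.up :=
    Finset.image_subset_iff.2 fun _ ↦ hG'.fst_mem_up
  rw [HfUp, comp_up, ed_fst, union_sdiff_union_of_disjoint (disjoint_up_image_add hG hG')
    ed_s_subset (Finset.image_subset_image ed'_subset), HfUp, HfUp, sdiff_sdiff_left,
    Finset.image_sdiff _ _ (add_left_injective _), Finset.sup_eq_union]

theorem HfDn_comp (hG : G.Valid) (hG' : G'.Valid) (hs : s ∈ matchings G G') :
    (comp G G' s).HfDn = G.HfDn ∪ (G'.HfDn \ s.image Prod.snd).image (· + G.omega) := by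
  have ed_snd : (comp G G' s).ed.image Prod.snd = G.ed.image Prod.snd ∪
      (G'.ed.image Prod.snd ∪ s.image Prod.snd).image (· + G.omega) := by
    rw [Finset.union_comm (G'.ed.image _)]
    simp only [comp_ed, Finset.image_union, Finset.image_image, Finset.union_assoc]
    rfl
  have ed_subset : G.ed.image Prod.snd ⊆ G.dn := Finset.image_subset_iff.2 fun _ ↦ hG.snd_mem_dn
  have ed'_s_subset : G'.ed.image Prod.snd ∪ s.image Prod.snd ⊆ G'.dn := by
    rw [matchings_eq_partialMatchings] at hs
    exact Finset.union_subset (Finset.image_subset_iff.2 fun _ ↦ hG'.snd_mem_dn)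
      ((image_snd_subset_of_mem_partialMatchings hs).trans G'.HfDn_subset_dn)
  rw [HfDn, comp_dn, ed_snd, union_sdiff_union_of_disjoint (disjoint_dn_image_add hG hG') ed_subset
    (Finset.image_subset_image ed'_s_subset), HfDn, HfDn, sdiff_sdiff_left,
    Finset.image_sdiff _ _ (add_left_injective _), Finset.sup_eq_union]

/-- `s` joins `A` to `B`, `q` joins `B` to `C`, and `r` joins `A` to `C`. -/
theorem comp_comp (A B C : BD) (s q r : Finset (ℕ × ℕ)) :
    comp (comp A B s) C (q.image (Prod.map (· + A.omega) id) ∪ r) =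
      comp A (comp B C q) (s ∪ r.image (Prod.map id (· + B.omega))) := by
  have add_comp_add : (· + A.omega) ∘ (· + B.omega) = (· + (A.omega + B.omega)) := by
    funext k
    exact (add_assoc k B.omega A.omega).trans (congrArg _ (add_comm _ _))
  have image_union_assoc (U V W : Finset ℕ) :
      (U ∪ V.image (· + A.omega)) ∪ W.image (· + (A.omega + B.omega)) =
        U ∪ (V ∪ W.image (· + B.omega)).image (· + A.omega) := by
    rw [Finset.image_union, Finset.image_image, add_comp_add, Finset.union_assoc]
  rw [BD.mk.injEq]
  refine ⟨List.append_assoc .., ?_, ?_, ?_⟩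
  · simp only [comp_up, omega_comp, image_union_assoc]
  · simp only [comp_dn, omega_comp, image_union_assoc]
  · simp only [comp_ed, omega_comp, Finset.image_union, Finset.image_image, Prod.map_comp_map,
      Function.comp_id, Function.id_comp, add_comp_add]
    ac_rfl

theorem eps_comp (G : BD) : comp eps G ∅ = G := by
  simp [comp, eps, omega]

theorem comp_eps (G : BD) : comp G eps ∅ = G := by
  simp [comp, eps]

theorem matchings_eps_left (G : BD) : matchings eps G = {∅} := by
  rw [matchings_eq_partialMatchings, HfUp, eps, Finset.empty_sdiff, partialMatchings_empty_left]

theorem matchings_eps_right (G : BD) : matchings G eps = {∅} := by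
  rw [matchings_eq_partialMatchings, HfDn, eps, Finset.empty_sdiff, partialMatchings_empty_right]

theorem sum_matchings_comp_left {M : Type*} [AddCommMonoid M] (hA : A.Valid) (hB : B.Valid)
    (hs : s ∈ matchings A B) (C : BD) (f : Finset (ℕ × ℕ) → M) :
    ∑ t ∈ matchings (comp A B s) C, f t =
      ∑ q ∈ matchings B C,
        ∑ r ∈ partialMatchings (A.HfUp \ s.image Prod.fst) (C.HfDn \ q.image Prod.snd),
          f (q.image (Prod.map (· + A.omega) id) ∪ r) := by
  have disj : Disjoint (B.HfUp.image (· + A.omega)) (A.HfUp \ s.image Prod.fst) :=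
    ((disjoint_up_image_add hA hB).mono (Finset.sdiff_subset.trans A.HfUp_subset_up)
      (Finset.image_subset_image B.HfUp_subset_up)).symm
  rw [matchings_eq_partialMatchings, HfUp_comp hA hB hs, Finset.union_comm,
    sum_partialMatchings_union_left disj, ← Finset.image_id (s := C.HfDn),
    sum_partialMatchings_image (add_left_injective _) Function.injective_id,
    matchings_eq_partialMatchings]
  simp only [Finset.image_id, Finset.image_image]
  rfl

theorem sum_matchings_comp_right {M : Type*} [AddCommMonoid M] (hB : B.Valid) (hC : C.Valid)
    {q : Finset (ℕ × ℕ)} (hq : q ∈ matchings B C) (A : BD) (f : Finset (ℕ × ℕ) → M) :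
    ∑ t ∈ matchings A (comp B C q), f t =
      ∑ s ∈ matchings A B,
        ∑ r ∈ partialMatchings (A.HfUp \ s.image Prod.fst) (C.HfDn \ q.image Prod.snd),
          f (s ∪ r.image (Prod.map id (· + B.omega))) := by
  have disj : Disjoint B.HfDn ((C.HfDn \ q.image Prod.snd).image (· + B.omega)) :=
    (disjoint_dn_image_add hB hC).mono B.HfDn_subset_dn
      (Finset.image_subset_image (Finset.sdiff_subset.trans C.HfDn_subset_dn))
  rw [matchings_eq_partialMatchings, HfDn_comp hB hC hq, sum_partialMatchings_union_right _ disj,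
    matchings_eq_partialMatchings]
  refine Finset.sum_congr rfl fun s _ ↦ ?_
  simpa only [Finset.image_id] using
    sum_partialMatchings_image Function.injective_id (add_left_injective B.omega) _ _
      fun r ↦ f (s ∪ r)

end BD

section StarProduct

open BD

theorem mkB_of_valid {G : BD} (hG : G.Valid) : mkB G = Finsupp.single ⟨G, hG⟩ 1 :=
  dif_pos hG

theorem liftB_single {V : Type*} [AddCommMonoid V] [Module ℂ V] (f : BDiagram → V)
    (A : BDiagram) (a : ℂ) : liftB f (Finsupp.single A a) = a • f A := by
  rw [liftB, Finsupp.lsum_single, LinearMap.toSpanSingleton_apply]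

theorem starB_single (A B : BDiagram) :
    starB (Finsupp.single A 1) (Finsupp.single B 1) = mulfun A B := by
  rw [starB, liftB_single, one_smul, liftB_single, one_smul]

theorem starB_mkB {A B : BD} (hA : A.Valid) (hB : B.Valid) :
    starB (mkB A) (mkB B) = ∑ s ∈ matchings A B, mkB (comp A B s) := by
  rw [mkB_of_valid hA, mkB_of_valid hB, starB_single]
  rfl

theorem starB_mkB_assoc {A B C : BD} (hA : A.Valid) (hB : B.Valid) (hC : C.Valid) :
    starB (starB (mkB A) (mkB B)) (mkB C) = starB (mkB A) (starB (mkB B) (mkB C)) := by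
  calc starB (starB (mkB A) (mkB B)) (mkB C)
    _ = ∑ s ∈ matchings A B, ∑ t ∈ matchings (comp A B s) C, mkB (comp (comp A B s) C t) := by
      rw [starB_mkB hA hB, map_sum, LinearMap.sum_apply]
      exact Finset.sum_congr rfl fun s hs ↦ starB_mkB (comp_valid hA hB hs) hC
    _ = ∑ s ∈ matchings A B, ∑ q ∈ matchings B C,
          ∑ r ∈ partialMatchings (A.HfUp \ s.image Prod.fst) (C.HfDn \ q.image Prod.snd),
            mkB (comp A (comp B C q) (s ∪ r.image (Prod.map id (· + B.omega)))) :=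
      Finset.sum_congr rfl fun s hs ↦ by
        simp only [sum_matchings_comp_left hA hB hs, comp_comp]
    _ = ∑ q ∈ matchings B C, ∑ t ∈ matchings A (comp B C q), mkB (comp A (comp B C q) t) :=
      Finset.sum_comm.trans <| Finset.sum_congr rfl fun q hq ↦
        (sum_matchings_comp_right hB hC hq A fun t ↦ mkB (comp A (comp B C q) t)).symm
    _ = starB (mkB A) (starB (mkB B) (mkB C)) := by
      rw [starB_mkB hB hC, map_sum]
      exact Finset.sum_congr rfl fun q hq ↦ (starB_mkB hA (comp_valid hB hC hq)).symm

theorem BSpace.induction {p : BSpace → Prop} (zero : p 0) (add : ∀ u v, p u → p v → p (u + v))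
    (smul_mkB : ∀ (a : ℂ) (A : BD), A.Valid → p (a • mkB A)) (u : BSpace) : p u :=
  Finsupp.induction_linear u zero add fun A a ↦ by
    simpa only [mkB_of_valid A.2, Finsupp.smul_single_one] using smul_mkB a A.1 A.2

theorem starB_assoc (u v w : BSpace) : starB (starB u v) w = starB u (starB v w) := by
  induction u using BSpace.induction with
  | zero => simp only [map_zero, LinearMap.zero_apply]
  | add u₁ u₂ h₁ h₂ => simp only [map_add, LinearMap.add_apply, h₁, h₂]
  | smul_mkB a A hA =>
  induction v using BSpace.induction with
  | zero => simp only [map_zero, LinearMap.zero_apply]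
  | add v₁ v₂ h₁ h₂ => simp only [map_add, LinearMap.add_apply, h₁, h₂]
  | smul_mkB b B hB =>
  induction w using BSpace.induction with
  | zero => simp only [map_zero]
  | add w₁ w₂ h₁ h₂ => simp only [map_add, h₁, h₂]
  | smul_mkB c C hC => simp only [map_smul, LinearMap.smul_apply, starB_mkB_assoc hA hB hC]

theorem unitB_eq_mkB : unitB = mkB eps := (mkB_of_valid eps_valid).symm

theorem unitB_starB (u : BSpace) : starB unitB u = u := by
  induction u using BSpace.induction with
  | zero => rw [map_zero]
  | add u₁ u₂ h₁ h₂ => rw [map_add, h₁, h₂]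
  | smul_mkB a A hA =>
    rw [map_smul, unitB_eq_mkB, starB_mkB eps_valid hA, matchings_eps_left, Finset.sum_singleton,
      eps_comp]

theorem starB_unitB (u : BSpace) : starB u unitB = u := by
  induction u using BSpace.induction with
  | zero => rw [map_zero, LinearMap.zero_apply]
  | add u₁ u₂ h₁ h₂ => rw [map_add, LinearMap.add_apply, h₁, h₂]
  | smul_mkB a A hA =>
    rw [map_smul, LinearMap.smul_apply, unitB_eq_mkB, starB_mkB hA eps_valid, matchings_eps_right,
      Finset.sum_singleton, comp_eps]

theorem exists_eq_comp_of_mem_support_mulfun {A B C : BDiagram} (hC : C ∈ (mulfun A B).support) :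
    ∃ s ∈ matchings A.1 B.1, C.1 = comp A.1 B.1 s := by
  classical
  obtain ⟨s, hs, hCs⟩ := Finset.mem_biUnion.1 (Finsupp.support_finsetSum hC)
  rw [mkB_of_valid (comp_valid A.2 B.2 hs)] at hCs
  exact ⟨s, hs, congrArg Subtype.val (Finset.mem_singleton.1 (Finsupp.support_single_subset hCs))⟩

end StarProduct

/-- `(ℬ, ⋆)` is an associative unital `ℂ`-algebra with unit the empty
B-diagram, graded by `ω`: the product of two B-diagrams is a linear combination of
B-diagrams whose number of half-edges is the sum of the numbers of half-edges. -/
theorem starB_assoc_unital_graded :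
    (∀ u v w : BSpace, starB (starB u v) w = starB u (starB v w)) ∧
    (∀ u : BSpace, starB unitB u = u ∧ starB u unitB = u) ∧
    (∀ A B : BDiagram, ∀ C ∈ (starB (Finsupp.single A 1) (Finsupp.single B 1)).support,
      C.1.omega = A.1.omega + B.1.omega) := by
  refine ⟨starB_assoc, fun u ↦ ⟨unitB_starB u, starB_unitB u⟩, fun A B C hC ↦ ?_⟩
  rw [starB_single] at hC
  obtain ⟨s, -, hCs⟩ := exists_eq_comp_of_mem_support_mulfun hC
  rw [hCs, BD.omega_comp]
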